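/- arXiv:math/0610854 — 2 statements merged into one kernel-verified Lean document; each statement's English description precedes it below -/
import Mathlib

section
/- Let n ≥ 2 and q ≥ 1 be integers and γ ∈ (0,1]. For t = 0, 1, …, n+q−3 define the q×q real matrix A(t) = I_q − (1−γ)·Σ_{j=1}^{q} χ(j−1 ≤ t ≤ n+j−3)·e_j(e_j − e_{j−1})ᵀ, where e_1,…,e_q is the standard basis of ℝ^q, e_0 = 0 by convention, and χ(·) ∈ {0,1} is the indicator of the stated condition on t. Then the q-th row sum of the ordered product A(n+q−3)·A(n+q−4)···A(1)·A(0) equals γ^{n−1}·Σ_{i=0}^{q−1} (1−γ)^i·C(n+i−2, n−2), where C(a,b) denotes the binomial coefficient. -/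
/-- The standard basis vectors of `ℝ^q`, numbered `1, …, q` (with `e 0 = 0` and
`e j = 0` for `j > q` by convention). -/
noncomputable def eVec (q : ℕ) (j : ℕ) : Fin q → ℝ :=
  if h : 1 ≤ j ∧ j ≤ q then Pi.single (⟨j - 1, by omega⟩ : Fin q) 1 else 0

/-- The matrix `A(t) = I_q - (1-γ) Σ_{j=1}^{q} χ(j-1 ≤ t ≤ n+j-3) e_j (e_j - e_{j-1})ᵀ`. -/
noncomputable def Amat (n q : ℕ) (γ : ℝ) (t : ℕ) : Matrix (Fin q) (Fin q) ℝ :=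
  1 - (1 - γ) • ∑ j ∈ Finset.Icc 1 q,
    (if j - 1 ≤ t ∧ t ≤ n + j - 3 then (1 : ℝ) else 0) •
      Matrix.vecMulVec (eVec q j) (eVec q j - eVec q (j - 1))

/-- The ordered (time-decreasing) product `A(T-1) ⬝ A(T-2) ⬝ ⋯ ⬝ A(0)`. -/
noncomputable def prodRev {q : ℕ} (A : ℕ → Matrix (Fin q) (Fin q) ℝ) :
    ℕ → Matrix (Fin q) (Fin q) ℝ
  | 0 => 1
  | t + 1 => A t * prodRev A t

/-! Apply the product to the all-ones vector. With `v_0 = 0`, one step replaces `v_j` by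
`γ v_j + (1 - γ) v_{j-1}` while `t` is in the window of `j`, which has length `n - 1`, and leaves
`v_j` alone otherwise. This is conditioning on the first of a sequence of independent trials of
success probability `γ`: after `s` active steps, `v_j` is the probability that fewer than `j`
failures precede the `s`-th success. The windows of `j - 1` and `j` are shifted by one, so when
`v_j` takes its step number `s + 1`, `v_{j-1}` has already taken exactly `s + 1`. -/

section NegBinomial

theorem multichoose_succ_eq_choose (m i : ℕ) : (m + 1).multichoose i = (m + i).choose m := by
  rw [Nat.multichoose_eq, show m + 1 + i - 1 = m + i by omega, Nat.choose_symm_add]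

theorem sum_range_pow_mul_multichoose_succ {R : Type*} [CommSemiring R] (p : R) (k s : ℕ) :
    ∑ i ∈ Finset.range (k + 1), p ^ i * ((s + 1).multichoose i : R) =
      ∑ i ∈ Finset.range (k + 1), p ^ i * (s.multichoose i : R) +
        p * ∑ i ∈ Finset.range k, p ^ i * ((s + 1).multichoose i : R) := by
  simp only [Finset.sum_range_succ' _ k, Nat.multichoose_succ_succ, Nat.multichoose_zero_right,
    Finset.mul_sum]
  rw [add_right_comm, ← Finset.sum_add_distrib]
  congr 1
  refine Finset.sum_congr rfl fun i _ => ?_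
  push_cast
  ring

variable {R : Type*} [CommRing R]

/-- The negative binomial distribution function: for `γ ∈ (0, 1]`, the probability that fewer than
`k` failures precede the `s`-th success in independent trials of success probability `γ`. The
inequality is strict, so that the value at `k = 0` is `0`; writing `C(s + i - 1, i)` as
`s.multichoose i` makes `s = 0` correct as well. -/
def negBinomialCDF (γ : R) (k s : ℕ) : R :=
  γ ^ s * ∑ i ∈ Finset.range k, (1 - γ) ^ i * (s.multichoose i : R)

theorem negBinomialCDF_zero_left (γ : R) (s : ℕ) : negBinomialCDF γ 0 s = 0 := by
  simp [negBinomialCDF]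

theorem negBinomialCDF_succ_zero (γ : R) (k : ℕ) : negBinomialCDF γ (k + 1) 0 = 1 := by
  simp [negBinomialCDF, Finset.sum_range_succ']

theorem negBinomialCDF_succ_succ (γ : R) (k s : ℕ) :
    negBinomialCDF γ (k + 1) (s + 1) =
      γ * negBinomialCDF γ (k + 1) s + (1 - γ) * negBinomialCDF γ k (s + 1) := by
  simp only [negBinomialCDF, sum_range_pow_mul_multichoose_succ]
  ring

end NegBinomial

open Matrix

theorem eVec_zero (q : ℕ) : eVec q 0 = 0 := by
  simp [eVec]

theorem eVec_val_succ {q : ℕ} (k : Fin q) : eVec q (k + 1) = Pi.single k 1 := by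
  simp [eVec]

theorem eVec_dotProduct_eVec {q j : ℕ} (hj : j ∈ Finset.Icc 1 q) (i : ℕ) :
    eVec q j ⬝ᵥ eVec q i = if i = j then 1 else 0 := by
  obtain ⟨k, rfl⟩ : ∃ k : Fin q, j = k + 1 := by
    obtain ⟨hj₁, hjq⟩ := Finset.mem_Icc.1 hj
    exact ⟨⟨j - 1, by omega⟩, (Nat.sub_add_cancel hj₁).symm⟩
  rw [eVec_val_succ, single_one_dotProduct]
  by_cases hi : 1 ≤ i ∧ i ≤ q
  · have hik : (k : ℕ) = i - 1 ↔ i = k + 1 := by omega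
    simp only [eVec, dif_pos hi, Pi.single_apply, Fin.ext_iff, hik]
  · rw [eVec, dif_neg hi, Pi.zero_apply, if_neg (by omega)]

theorem eVec_dotProduct_Amat_mulVec {q j : ℕ} (hj : j ∈ Finset.Icc 1 q) (n : ℕ) (γ : ℝ) (t : ℕ)
    (v : Fin q → ℝ) :
    eVec q j ⬝ᵥ Amat n q γ t *ᵥ v =
      if j - 1 ≤ t ∧ t ≤ n + j - 3 then γ * (eVec q j ⬝ᵥ v) + (1 - γ) * (eVec q (j - 1) ⬝ᵥ v)
      else eVec q j ⬝ᵥ v := by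
  simp only [Amat, sub_mulVec, one_mulVec, smul_mulVec, sum_mulVec, vecMulVec_mulVec,
    op_smul_eq_smul, dotProduct_sub, dotProduct_smul, dotProduct_sum, sub_dotProduct,
    eVec_dotProduct_eVec hj, smul_eq_mul, mul_ite, mul_one, mul_zero, Finset.sum_ite_eq', hj,
    if_true]
  split_ifs <;> ring

/-- `min (t + 1 - j) (n - 1)` counts the times before `t` in the window of `j`, for `j ≥ 1`. -/
theorem eVec_dotProduct_prodRev_Amat_mulVec_one {n q j : ℕ} (hn : 2 ≤ n) (hj : j ≤ q) (γ : ℝ)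
    (t : ℕ) :
    eVec q j ⬝ᵥ prodRev (Amat n q γ) t *ᵥ 1 =
      negBinomialCDF γ j (min (t + 1 - j) (n - 1)) := by
  induction t generalizing j with
  | zero =>
    rw [prodRev, one_mulVec]
    obtain _ | j := j
    · rw [eVec_zero, zero_dotProduct, negBinomialCDF_zero_left]
    · rw [eVec_val_succ ⟨j, hj⟩, single_one_dotProduct, Pi.one_apply,
        show min (0 + 1 - (j + 1)) (n - 1) = 0 by omega, negBinomialCDF_succ_zero]
  | succ t ih =>
    obtain _ | j := j
    · rw [eVec_zero, zero_dotProduct, negBinomialCDF_zero_left]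
    rw [prodRev, ← mulVec_mulVec, eVec_dotProduct_Amat_mulVec (by simp [hj]), ih hj,
      Nat.add_sub_cancel, ih (by omega)]
    split_ifs with hwindow
    · rw [show min (t + 1 - (j + 1)) (n - 1) = t - j by omega,
        show min (t + 1 - j) (n - 1) = t - j + 1 by omega,
        show min (t + 1 + 1 - (j + 1)) (n - 1) = t - j + 1 by omega, negBinomialCDF_succ_succ]
    · congr 1
      omega

theorem last_row_sum_of_A_product_general {n q : ℕ} (hn : 2 ≤ n) (γ : ℝ) (k : Fin q) {T : ℕ}
    (hT : n + k ≤ T + 1) :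
    ∑ i, prodRev (Amat n q γ) T k i =
      γ ^ (n - 1) *
        ∑ i ∈ Finset.range (k + 1), (1 - γ) ^ i * (Nat.choose (n + i - 2) (n - 2) : ℝ) := by
  have hchoose (i : ℕ) : (n - 1).multichoose i = (n + i - 2).choose (n - 2) := by
    rw [show n - 1 = n - 2 + 1 by omega, multichoose_succ_eq_choose,
      show n - 2 + i = n + i - 2 by omega]
  calc ∑ i, prodRev (Amat n q γ) T k i
      = eVec q (k + 1) ⬝ᵥ prodRev (Amat n q γ) T *ᵥ 1 := by
        rw [eVec_val_succ, single_one_dotProduct, mulVec, dotProduct_one]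
    _ = negBinomialCDF γ (k + 1) (n - 1) := by
        rw [eVec_dotProduct_prodRev_Amat_mulVec_one hn k.isLt,
          show min (T + 1 - (k + 1)) (n - 1) = n - 1 by omega]
    _ = _ := by simp only [negBinomialCDF, hchoose]

/-- The `q`-th row sum of the product `A(n+q-3)⋯A(0)` equals
`γ^{n-1} Σ_{i=0}^{q-1} (1-γ)^i C(n+i-2, n-2)`. -/
theorem last_row_sum_of_A_product
    (n q : ℕ) (hn : 2 ≤ n) (hq : 1 ≤ q) (γ : ℝ) (hγ : γ ∈ Set.Ioc (0 : ℝ) 1) :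
    ∑ i, prodRev (Amat n q γ) (n + q - 2) (⟨q - 1, by omega⟩ : Fin q) i =
      γ ^ (n - 1) *
        ∑ i ∈ Finset.range q, (1 - γ) ^ i * (Nat.choose (n + i - 2) (n - 2) : ℝ) := by
  simpa only [Nat.sub_add_cancel hq] using
    last_row_sum_of_A_product_general hn γ (⟨q - 1, by omega⟩ : Fin q) (T := n + q - 2)
      (by dsimp only; omega)
end

section
/- Let n ≥ 2 and q ≥ 1 be integers, γ ∈ (0,1], and ξ = (1−γ)/γ. For t = 0, 1, …, n+q−3 define the q×q real matrices A(t) = I_q − (1−γ)·Σ_{j=1}^{q} χ(j−1 ≤ t ≤ n+j−3)·e_j(e_j − e_{j−1})ᵀ (with e_0 = 0) and B(t) = I_q + ξ·Σ_{i=1}^{q−1} χ(i ≤ t ≤ i+n−2)·e_{i+1}e_iᵀ. Then A(n+q−3)·A(n+q−4)···A(0) = γ^{n−q}·diag(1, γ, γ², …, γ^{q−1})·(B(n+q−3)·B(n+q−4)···B(0))·diag(γ^{q−1}, …, γ², γ, 1), where γ^{n−q} is the integer power of γ (with negative exponent allowed since γ > 0). -/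
/-- The matrix `B(t) = I_q + ξ Σ_{i=1}^{q-1} χ(i ≤ t ≤ i+n-2) e_{i+1} e_iᵀ`. -/
noncomputable def Bmat (n q : ℕ) (ξ : ℝ) (t : ℕ) : Matrix (Fin q) (Fin q) ℝ :=
  1 + ξ • ∑ i ∈ Finset.Icc 1 (q - 1),
    (if i ≤ t ∧ t ≤ i + n - 2 then (1 : ℝ) else 0) •
      Matrix.vecMulVec (eVec q (i + 1)) (eVec q i)

/-!
Number rows and columns from `0`. Row `i` of `A(t)` and of `B(t)` differs from that of the identity
only at the times `i ≤ t ≤ i + n - 2`, and then only in columns `i - 1` and `i`. Let `D(t)` be the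
diagonal matrix whose `i`-th entry is `γ` to the power of `t` clamped to `[i, i + n - 1]`. When row
`i` is active, the clamped times of rows `i - 1` and `i` are both `t`, and that of row `i` is about
to become `t + 1`; hence `A(t) D(t) = D(t + 1) B(t)`. Telescoping gives
`A(T - 1) ⋯ A(0) D(0) = D(T) B(T - 1) ⋯ B(0)`, where `D(0) = diag(1, γ, …, γ^{q-1})` and, once no
row will be active again, `D(T) = γ^{n-1} D(0)`.
-/

open Matrix

theorem prodRev_mul_of_intertwining {p q : ℕ} {A : ℕ → Matrix (Fin q) (Fin q) ℝ}
    {B : ℕ → Matrix (Fin p) (Fin p) ℝ} {D : ℕ → Matrix (Fin q) (Fin p) ℝ}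
    (h : ∀ t, A t * D t = D (t + 1) * B t) (T : ℕ) :
    prodRev A T * D 0 = D T * prodRev B T := by
  induction T with
  | zero => simp [prodRev]
  | succ T ih =>
    calc A T * prodRev A T * D 0
        = A T * D T * prodRev B T := by rw [Matrix.mul_assoc, ih, Matrix.mul_assoc]
      _ = D (T + 1) * (B T * prodRev B T) := by rw [h, Matrix.mul_assoc]

theorem eVec_apply (q j : ℕ) (i : Fin q) : eVec q j i = if j = (i : ℕ) + 1 then 1 else 0 := by
  have hi := i.isLt
  by_cases hj : 1 ≤ j ∧ j ≤ q
  · simp only [eVec, dif_pos hj, Pi.single_apply, Fin.ext_iff]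
    congr 1
    grind
  · rw [eVec, dif_neg hj, if_neg (by omega), Pi.zero_apply]

theorem Amat_apply (n q : ℕ) (γ : ℝ) (t : ℕ) (i k : Fin q) :
    Amat n q γ t i k =
      (1 : Matrix (Fin q) (Fin q) ℝ) i k - (1 - γ) * if (i : ℕ) ≤ t ∧ t ≤ i + n - 2 then
        (1 : Matrix (Fin q) (Fin q) ℝ) i k - (if (i : ℕ) = k + 1 then 1 else 0) else 0 := by
  have hwindow : n + (i + 1) - 3 = i + n - 2 := by omega
  simp only [Amat, Matrix.sub_apply, Matrix.smul_apply, Matrix.sum_apply, vecMulVec_apply,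
    Pi.sub_apply, eVec_apply]
  simp [one_apply, Fin.ext_iff, hwindow]

theorem Bmat_apply (n q : ℕ) (ξ : ℝ) (t : ℕ) (i k : Fin q) :
    Bmat n q ξ t i k =
      (1 : Matrix (Fin q) (Fin q) ℝ) i k + ξ * if (i : ℕ) ≤ t ∧ t ≤ i + n - 2 then
        (if (i : ℕ) = k + 1 then 1 else 0) else 0 := by
  simp only [Bmat, Matrix.add_apply, Matrix.smul_apply, Matrix.sum_apply, vecMulVec_apply,
    eVec_apply]
  simp only [Nat.add_right_cancel_iff, mul_ite, mul_one, mul_zero, smul_eq_mul, Finset.sum_ite_eq',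
    Finset.mem_Icc]
  grind

/-- The time `t` clamped to the interval `[i, i + n - 1]`. For `n ≥ 2` it advances from `t` to
`t + 1` exactly when row `i` (numbered from `0`) of `A(t)` and `B(t)` is active, that is,
`i ≤ t ≤ i + n - 2`. -/
def clampedTime (n i t : ℕ) : ℕ :=
  max i (min t (i + n - 1))

theorem clampedTime_eq_self {n i t : ℕ} (hi : i ≤ t) (ht : t ≤ i + n - 1) :
    clampedTime n i t = t := by
  simp [clampedTime, hi, ht]

theorem clampedTime_succ_of_inactive {n i t : ℕ} (hactive : ¬(i ≤ t ∧ t ≤ i + n - 2)) :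
    clampedTime n i (t + 1) = clampedTime n i t := by
  unfold clampedTime
  omega

/-- The diagonal gauge matrix `D(t)` that intertwines `A(t)` with `B(t)`. -/
def gaugeMatrix (n q : ℕ) (γ : ℝ) (t : ℕ) : Matrix (Fin q) (Fin q) ℝ :=
  diagonal fun i => γ ^ clampedTime n i t

theorem gaugeMatrix_zero (n q : ℕ) (γ : ℝ) :
    gaugeMatrix n q γ 0 = diagonal fun i : Fin q => γ ^ (i : ℕ) := by
  simp [gaugeMatrix, clampedTime]

theorem gaugeMatrix_of_le {n q t : ℕ} (ht : n + q - 2 ≤ t) (γ : ℝ) :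
    gaugeMatrix n q γ t = γ ^ (n - 1) • diagonal fun i : Fin q => γ ^ (i : ℕ) := by
  have hexp (i : Fin q) : clampedTime n i t = n - 1 + i := by
    unfold clampedTime
    omega
  simp only [gaugeMatrix, hexp, pow_add, ← diagonal_smul, Pi.smul_def, smul_eq_mul]

theorem Amat_mul_gaugeMatrix {n : ℕ} (hn : 2 ≤ n) (q : ℕ) {γ ξ : ℝ} (hξ : γ * ξ = 1 - γ) (t : ℕ) :
    Amat n q γ t * gaugeMatrix n q γ t = gaugeMatrix n q γ (t + 1) * Bmat n q ξ t := by
  ext i k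
  rw [gaugeMatrix, gaugeMatrix, mul_diagonal, diagonal_mul, Amat_apply, Bmat_apply]
  by_cases hactive : (i : ℕ) ≤ t ∧ t ≤ i + n - 2
  · have hnext : clampedTime n i (t + 1) = t + 1 := clampedTime_eq_self (by omega) (by omega)
    rw [if_pos hactive, if_pos hactive, hnext, pow_succ]
    by_cases hband : k = i ∨ (i : ℕ) = k + 1
    · have hcol : clampedTime n k t = t := clampedTime_eq_self (by grind) (by grind)
      rw [hcol]
      split_ifs
      · linear_combination -γ ^ t * hξ
      · ring
    · have hdiag : i ≠ k := fun h => hband (.inl h.symm)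
      have hsub : (i : ℕ) ≠ k + 1 := fun h => hband (.inr h)
      simp [one_apply_ne hdiag, hsub]
  · rw [if_neg hactive, if_neg hactive, clampedTime_succ_of_inactive hactive]
    obtain rfl | hdiag := eq_or_ne i k
    · ring
    · simp [one_apply_ne hdiag]

theorem diagonal_pow_mul_diagonal_pow_rev (q : ℕ) {γ : ℝ} (hγ : γ ≠ 0) :
    (diagonal fun i : Fin q => γ ^ (i : ℕ)) *
      (γ ^ (1 - (q : ℤ)) • diagonal fun i : Fin q => γ ^ (q - 1 - (i : ℕ))) = 1 := by
  rw [← diagonal_smul, diagonal_mul_diagonal, ← diagonal_one]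
  congr 1
  ext i
  simp only [Pi.smul_apply, smul_eq_mul, ← zpow_natCast, ← zpow_add₀ hγ]
  rw [show ((i : ℕ) : ℤ) + (1 - q + ((q - 1 - i : ℕ) : ℤ)) = 0 by omega, zpow_zero]

theorem A_product_factorization_general {n : ℕ} (hn : 2 ≤ n) (q : ℕ) {γ : ℝ} (hγ : γ ≠ 0) :
    prodRev (Amat n q γ) (n + q - 2) =
      γ ^ ((n : ℤ) - (q : ℤ)) •
        (diagonal (fun i : Fin q => γ ^ (i : ℕ)) *
          prodRev (Bmat n q ((1 - γ) / γ)) (n + q - 2) *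
          diagonal (fun i : Fin q => γ ^ (q - 1 - (i : ℕ)))) := by
  set P := prodRev (Amat n q γ) (n + q - 2)
  set Q := prodRev (Bmat n q ((1 - γ) / γ)) (n + q - 2)
  set D := diagonal fun i : Fin q => γ ^ (i : ℕ)
  set E := diagonal fun i : Fin q => γ ^ (q - 1 - (i : ℕ))
  have htelescope : P * D = γ ^ (n - 1) • D * Q := by
    have h := prodRev_mul_of_intertwining
      (Amat_mul_gaugeMatrix hn q (mul_div_cancel₀ (1 - γ) hγ)) (n + q - 2)
    rwa [gaugeMatrix_zero, gaugeMatrix_of_le le_rfl] at h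
  have hpow : γ ^ (1 - (q : ℤ)) * γ ^ (n - 1) = γ ^ ((n : ℤ) - q) := by
    rw [← zpow_natCast, ← zpow_add₀ hγ]
    congr 1
    omega
  calc P = P * D * (γ ^ (1 - (q : ℤ)) • E) := by
        rw [Matrix.mul_assoc, diagonal_pow_mul_diagonal_pow_rev q hγ, Matrix.mul_one]
    _ = γ ^ ((n : ℤ) - q) • (D * Q * E) := by
        rw [htelescope, Matrix.smul_mul, Matrix.smul_mul, Matrix.mul_smul, smul_smul,
          mul_comm, hpow]

/-- The factorization formula
`A(n+q-3)⋯A(0) = γ^{n-q} diag(1,γ,…,γ^{q-1}) (B(n+q-3)⋯B(0)) diag(γ^{q-1},…,γ,1)`,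
with `ξ = (1-γ)/γ`. -/
theorem A_product_factorization
    (n q : ℕ) (hn : 2 ≤ n) (hq : 1 ≤ q) (γ : ℝ) (hγ : γ ∈ Set.Ioc (0 : ℝ) 1) :
    prodRev (Amat n q γ) (n + q - 2) =
      γ ^ ((n : ℤ) - (q : ℤ)) •
        (Matrix.diagonal (fun i : Fin q => γ ^ (i : ℕ)) *
          prodRev (Bmat n q ((1 - γ) / γ)) (n + q - 2) *
          Matrix.diagonal (fun i : Fin q => γ ^ (q - 1 - (i : ℕ)))) := by
  exact A_product_factorization_general hn q hγ.1.ne'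
end
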